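/- arXiv:0812.1064 — 2 statements merged into one kernel-verified Lean document; each statement's English description precedes it below -/
import Mathlib

section
/- Let k ≥ 0 and let G be a finite simple graph. Then G ∈ D̂_k if and only if the following four conditions hold: (D1) the minimum degree of G equals k+1; (D2) every proper contraction minor of G (a graph obtained from G by contracting a nonempty set of edges) has minimum degree at most k; (D3) G is connected; and (D4) no two vertices of G that both have degree at least k+2 are adjacent. -/
open SimpleGraph

/-- The degree of a vertex in a finite simple graph. -/
noncomputable def degC {V : Type} [Fintype V] (G : SimpleGraph V) (v : V) : ℕ := by
  classical exact G.degree v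

/-- The minimum degree of a finite simple graph. -/
noncomputable def minDegC {V : Type} [Fintype V] (G : SimpleGraph V) : ℕ := by
  classical exact G.minDegree

/-- `H` is a minor of `G`: there is a family of nonempty, pairwise disjoint,
connected branch sets, one for each vertex of `H`, such that every edge of `H`
is realised by an edge of `G` between the corresponding branch sets. -/
def IsMinorOf {W V : Type} (H : SimpleGraph W) (G : SimpleGraph V) : Prop :=
  ∃ B : W → Set V,
    (∀ w, (B w).Nonempty) ∧
    (∀ u w : W, u ≠ w → Disjoint (B u) (B w)) ∧
    (∀ w, (G.induce (B w)).Connected) ∧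
    (∀ ⦃u w : W⦄, H.Adj u w → ∃ a ∈ B u, ∃ b ∈ B w, G.Adj a b)

/-- `H` is a proper minor of `G`: a minor that is not isomorphic to `G`. -/
def IsProperMinorOf {W V : Type} (H : SimpleGraph W) (G : SimpleGraph V) : Prop :=
  IsMinorOf H G ∧ ¬ Nonempty (H ≃g G)

/-- `G ∈ D_k`: every minor of `G` has minimum degree at most `k`. -/
def MemD (k : ℕ) {V : Type} (G : SimpleGraph V) : Prop :=
  ∀ (W : Type) [Fintype W] (H : SimpleGraph W), IsMinorOf H G → minDegC H ≤ k

/-- `G ∈ D̂_k`: `G ∉ D_k` but every proper minor of `G` is in `D_k`. -/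
def MemDHat (k : ℕ) {V : Type} (G : SimpleGraph V) : Prop :=
  ¬ MemD k G ∧ ∀ (W : Type) [Fintype W] (H : SimpleGraph W), IsProperMinorOf H G → MemD k H

/-- `H` is a proper contraction minor of `G`: `H` is obtained from `G` by
contracting a nonempty set of edges, i.e. the branch sets form a partition of
the vertex set of `G` into connected parts, adjacency in `H` corresponds
exactly to the existence of an edge between branch sets, and at least one
branch set contains more than one vertex. -/
def IsProperContractionMinorOf {W V : Type} (H : SimpleGraph W) (G : SimpleGraph V) : Prop :=
  ∃ B : W → Set V,
    (∀ w, (B w).Nonempty) ∧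
    (∀ u w : W, u ≠ w → Disjoint (B u) (B w)) ∧
    (∀ v : V, ∃ w, v ∈ B w) ∧
    (∀ w, (G.induce (B w)).Connected) ∧
    (∀ u w : W, u ≠ w → (H.Adj u w ↔ ∃ a ∈ B u, ∃ b ∈ B w, G.Adj a b)) ∧
    (∃ w, (B w).Nontrivial)

/-!
The minor relation on finite graphs is transitive and, up to isomorphism, antisymmetric, so
`G ∈ D̂_k` exactly when `δ(G) > k` and every minor of `G` with minimum degree above `k` is
isomorphic to `G`. For such a `G`, contractions, components and edge deletions all yield minors.
Contracting loses vertices, so it must lower the minimum degree to at most `k`; a component has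
minimum degree at least `δ(G)`, so it is all of `G`; deleting an edge between two vertices of degree
at least `k + 2` would keep the minimum degree above `k`, so there is no such edge.

Conversely, a minor of `G` with fewer vertices is, when `G` is connected, a spanning subgraph of a
proper contraction minor, because branch sets can absorb neighbouring vertices until they cover `G`.
A minor with as many vertices as `G` is a spanning subgraph of `G`, and each missing edge would
witness two adjacent vertices of `G` whose degree exceeds the minimum degree of the minor.
-/

open scoped Function

section Degree

variable {V : Type*} {G H : SimpleGraph V} {n : ℕ}

theorem eq_of_le_of_ncard_edgeSet_le [Finite G.edgeSet] (hle : H ≤ G)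
    (hcard : G.edgeSet.ncard ≤ H.edgeSet.ncard) : H = G :=
  edgeSet_inj.1 <| Set.eq_of_subset_of_ncard_le (edgeSet_mono hle) hcard

theorem degree_lt_degree_of_le_of_adj {v w : V} [Fintype (G.neighborSet v)]
    [Fintype (H.neighborSet v)] (hle : H ≤ G) (hG : G.Adj v w) (hH : ¬H.Adj v w) :
    H.degree v < G.degree v := by
  rw [← card_neighborSet_eq_degree, ← card_neighborSet_eq_degree]
  exact Set.card_lt_card ⟨fun x hx => hle hx, fun hsub => hH (hsub hG)⟩

theorem eq_of_le_of_isIndepSet_lt_degree [G.LocallyFinite] [H.LocallyFinite] (hle : H ≤ G)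
    (hH : ∀ v, n ≤ H.degree v) (hG : G.IsIndepSet {v | n < G.degree v}) : H = G := by
  refine le_antisymm hle fun v w hvw => ?_
  by_contra hn
  have hv : n < G.degree v := (hH v).trans_lt (degree_lt_degree_of_le_of_adj hle hvw hn)
  have hw : n < G.degree w :=
    (hH w).trans_lt (degree_lt_degree_of_le_of_adj hle hvw.symm fun h => hn h.symm)
  exact hG hv hw hvw.ne hvw

theorem degree_deleteEdges_singleton_of_notMem {v : V} {e : Sym2 V} [Fintype (G.neighborSet v)]
    [Fintype ((G.deleteEdges {e}).neighborSet v)] (hv : v ∉ e) :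
    (G.deleteEdges {e}).degree v = G.degree v := by
  have hnbr : (G.deleteEdges {e}).neighborSet v = G.neighborSet v := by
    ext w
    simp only [mem_neighborSet, deleteEdges_adj, Set.mem_singleton_iff, and_iff_left_iff_imp]
    rintro - rfl
    exact hv (Sym2.mem_mk_left v w)
  simp only [← card_neighborSet_eq_degree, hnbr]

theorem degree_le_degree_deleteEdges_singleton_add_one (v : V) (e : Sym2 V)
    [Fintype (G.neighborSet v)] [Fintype ((G.deleteEdges {e}).neighborSet v)] :
    G.degree v ≤ (G.deleteEdges {e}).degree v + 1 := by
  classical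
  by_cases hv : v ∈ e
  · obtain ⟨w, rfl⟩ := hv
    have hnbr : (G.deleteEdges {s(v, w)}).neighborFinset v = (G.neighborFinset v).erase w := by
      ext x
      simp only [mem_neighborFinset, deleteEdges_adj, Finset.mem_erase]
      grind [G.irrefl]
    rw [← card_neighborFinset_eq_degree, ← card_neighborFinset_eq_degree, hnbr]
    exact tsub_le_iff_right.1 Finset.pred_card_le_card_erase
  · exact (degree_deleteEdges_singleton_of_notMem hv).ge.trans (Nat.le_succ _)

variable [Fintype V] [DecidableRel G.Adj]

theorem le_minDegree_deleteEdges_singleton {v w : V} [DecidableRel (G.deleteEdges {s(v, w)}).Adj]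
    (hG : n ≤ G.minDegree) (hv : n < G.degree v) (hw : n < G.degree w) :
    n ≤ (G.deleteEdges {s(v, w)}).minDegree := by
  have : Nonempty V := ⟨v⟩
  refine le_minDegree_of_forall_le_degree _ _ fun x => ?_
  by_cases hx : x ∈ s(v, w)
  · have hlt : n < G.degree x := by
      rcases Sym2.mem_iff.1 hx with rfl | rfl <;> assumption
    exact Nat.lt_succ_iff.1
      (hlt.trans_le (degree_le_degree_deleteEdges_singleton_add_one x s(v, w)))
  · rw [degree_deleteEdges_singleton_of_notMem hx]
    exact hG.trans (G.minDegree_le_degree x)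

theorem minDegree_le_of_isIndepSet_lt_degree (hG : G.IsIndepSet {v | n < G.degree v}) :
    G.minDegree ≤ n := by
  by_contra! hn
  have hdeg (v : V) : n < G.degree v := hn.trans_le (G.minDegree_le_degree v)
  obtain ⟨v⟩ : Nonempty V := by
    by_contra hV
    rw [not_nonempty_iff] at hV
    simp at hn
  obtain ⟨w, hvw⟩ := (G.degree_pos_iff_exists_adj v).1 (Nat.zero_lt_of_lt (hdeg v))
  exact hG (hdeg v) (hdeg w) hvw.ne hvw

theorem minDegree_le_minDegree_toSimpleGraph (C : G.ConnectedComponent) [Fintype C]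
    [DecidableRel C.toSimpleGraph.Adj] : G.minDegree ≤ C.toSimpleGraph.minDegree := by
  have := C.connected_toSimpleGraph.nonempty
  refine le_minDegree_of_forall_le_degree _ _ fun v => (G.minDegree_le_degree v).trans ?_
  simp only [← card_neighborSet_eq_degree]
  exact Fintype.card_le_of_injective
    (fun w => ⟨⟨w, C.mem_supp_of_adj_mem_supp v.2 w.2⟩, w.2⟩)
    fun x y hxy => by simpa [Subtype.ext_iff] using hxy

end Degree

section BranchSets

variable {V W : Type*} {B : W → Set V}

theorem exists_embedding_forall_mem (hne : ∀ w, (B w).Nonempty)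
    (hdisj : Pairwise (Disjoint on B)) : ∃ f : W ↪ V, ∀ w, f w ∈ B w := by
  choose f hf using hne
  refine ⟨⟨f, fun u w huw => ?_⟩, hf⟩
  by_contra h
  exact Set.disjoint_left.1 (hdisj h) (hf u) (huw ▸ hf w)

theorem exists_equiv_forall_eq_singleton [Finite V] (hne : ∀ w, (B w).Nonempty)
    (hdisj : Pairwise (Disjoint on B)) (hcard : Nat.card V ≤ Nat.card W) :
    ∃ e : W ≃ V, ∀ w, B w = {e w} := by
  obtain ⟨f, hf⟩ := exists_embedding_forall_mem hne hdisj
  have : Finite W := .of_injective f f.injective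
  let e : W ≃ V := .ofBijective f ((Nat.bijective_iff_injective_and_card f).2
    ⟨f.injective, (Nat.card_le_card_of_injective f f.injective).antisymm hcard⟩)
  refine ⟨e, fun w => Set.eq_singleton_iff_unique_mem.2 ⟨hf w, fun v hv => ?_⟩⟩
  obtain ⟨u, rfl⟩ := e.surjective v
  by_contra huw
  exact Set.disjoint_left.1 (hdisj fun h => huw (congrArg e h)) (hf u) hv

theorem pairwise_disjoint_update_insert [DecidableEq W] (hdisj : Pairwise (Disjoint on B)) {v : V}
    (hv : ∀ u, v ∉ B u) (w : W) :
    Pairwise (Disjoint on Function.update B w (insert v (B w))) := by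
  intro x y hxy
  have hvw (u : W) (hu : w ≠ u) : Disjoint (insert v (B w)) (B u) :=
    Set.disjoint_insert_left.2 ⟨hv u, hdisj hu⟩
  rcases eq_or_ne x w with rfl | hx
  · simpa [Function.onFun, hxy.symm] using hvw y hxy
  rcases eq_or_ne y w with rfl | hy
  · simpa [Function.onFun, hxy] using (hvw x hxy.symm).symm
  · simpa [Function.onFun, hx, hy] using hdisj hxy

end BranchSets

section MinorModel

variable {U V W : Type*} {F : SimpleGraph U} {G : SimpleGraph V} {H : SimpleGraph W}
  {B : W → Set V}

/-- A minor model of `H` in `G`: the branch sets that witness `IsMinorOf H G`. Nonemptiness of the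
branch sets is part of their connectedness. -/
structure IsMinorModel (B : W → Set V) (H : SimpleGraph W) (G : SimpleGraph V) : Prop where
  disjoint : Pairwise (Disjoint on B)
  connected : ∀ w, (G.induce (B w)).Connected
  exists_adj : ∀ ⦃u w⦄, H.Adj u w → ∃ a ∈ B u, ∃ b ∈ B w, G.Adj a b

/-- The graph on the branch sets `B` that joins two of them when `G` has an edge between them; if
`B` partitions the vertices of `G`, this is `G` with every branch set contracted to a vertex. -/
def branchGraph (G : SimpleGraph V) (B : W → Set V) : SimpleGraph W where
  Adj u w := u ≠ w ∧ ∃ a ∈ B u, ∃ b ∈ B w, G.Adj a b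
  symm := ⟨fun _ _ ⟨hne, a, ha, b, hb, hab⟩ => ⟨hne.symm, b, hb, a, ha, hab.symm⟩⟩
  loopless := ⟨fun _ hu => hu.1 rfl⟩

theorem connected_induce_singleton (G : SimpleGraph V) (v : V) :
    (G.induce ({v} : Set V)).Connected where
  preconnected := .of_subsingleton
  nonempty := ⟨⟨v, rfl⟩⟩

theorem connected_induce_iUnion (hH : H.Connected) (hB : ∀ w, (G.induce (B w)).Connected)
    (hadj : ∀ ⦃u w⦄, H.Adj u w → ∃ a ∈ B u, ∃ b ∈ B w, G.Adj a b) :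
    (G.induce (⋃ w, B w)).Connected := by
  have hsub := Set.subset_iUnion B
  have hpart (w : W) {a b : V} (ha : a ∈ B w) (hb : b ∈ B w) :
      (G.induce (⋃ w, B w)).Reachable ⟨a, hsub w ha⟩ ⟨b, hsub w hb⟩ :=
    ((hB w).preconnected ⟨a, ha⟩ ⟨b, hb⟩).map (G.induceHomOfLE (hsub w)).toHom
  have hwalk {u w : W} (p : H.Walk u w) : ∀ {a b : V} (ha : a ∈ B u) (hb : b ∈ B w),
      (G.induce (⋃ w, B w)).Reachable ⟨a, hsub u ha⟩ ⟨b, hsub w hb⟩ := by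
    induction p with
    | nil => exact hpart _
    | @cons u v _ huv _ ih =>
      intro a b ha hb
      obtain ⟨c, hc, d, hd, hcd⟩ := hadj huv
      have hcross : (G.induce (⋃ w, B w)).Adj ⟨c, hsub u hc⟩ ⟨d, hsub v hd⟩ := hcd
      exact ((hpart u ha hc).trans hcross.reachable).trans (ih hd hb)
  obtain ⟨w₀⟩ := hH.nonempty
  obtain ⟨a₀, ha₀⟩ := (hB w₀).nonempty
  refine (connected_iff_exists_forall_reachable _).2 ⟨⟨a₀, hsub w₀ ha₀⟩, fun ⟨b, hb⟩ => ?_⟩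
  obtain ⟨w, hw⟩ := Set.mem_iUnion.1 hb
  obtain ⟨p⟩ := hH.preconnected w₀ w
  exact hwalk p ha₀ hw

namespace IsMinorModel

theorem of_copy (f : Copy H G) : IsMinorModel (fun w => {f w}) H G where
  disjoint _ _ huw := Set.disjoint_singleton.2 (f.injective.ne huw)
  connected w := connected_induce_singleton G (f w)
  exists_adj _ _ huw := ⟨_, rfl, _, rfl, f.toHom.map_adj huw⟩

theorem nonempty (hB : IsMinorModel B H G) (w : W) : (B w).Nonempty :=
  Set.nonempty_coe_sort.1 (hB.connected w).nonempty

theorem finite [Finite V] (hB : IsMinorModel B H G) : Finite W := by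
  obtain ⟨f, -⟩ := exists_embedding_forall_mem hB.nonempty hB.disjoint
  exact .of_injective f f.injective

theorem comp {C : U → Set W} (hB : IsMinorModel B H G) (hC : IsMinorModel C F H) :
    IsMinorModel (fun u => ⋃ w : C u, B w) F G where
  disjoint u v huv := by
    simp only [Function.onFun, Set.disjoint_iUnion_left, Set.disjoint_iUnion_right]
    exact fun x w => hB.disjoint ((hC.disjoint huv).ne_of_mem w.2 x.2)
  connected u := connected_induce_iUnion (hC.connected u) (fun w => hB.connected w)
    fun _ _ hwx => hB.exists_adj hwx
  exists_adj u v huv := by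
    obtain ⟨w, hw, x, hx, hwx⟩ := hC.exists_adj huv
    obtain ⟨a, ha, b, hb, hab⟩ := hB.exists_adj hwx
    exact ⟨a, Set.mem_iUnion.2 ⟨⟨w, hw⟩, ha⟩, b, Set.mem_iUnion.2 ⟨⟨x, hx⟩, hb⟩, hab⟩

theorem le_branchGraph (hB : IsMinorModel B H G) : H ≤ branchGraph G B :=
  fun _ _ huw => ⟨huw.ne, hB.exists_adj huw⟩

theorem update_insert [DecidableEq W] (hB : IsMinorModel B H G) {a v : V} {w : W} (ha : a ∈ B w)
    (hv : ∀ u, v ∉ B u) (hav : G.Adj a v) :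
    IsMinorModel (Function.update B w (insert v (B w))) H G where
  disjoint := pairwise_disjoint_update_insert hB.disjoint hv w
  connected := by
    refine (Function.forall_update_iff B fun _ s => (G.induce s).Connected).2
      ⟨?_, fun u _ => hB.connected u⟩
    exact connected_induce_union (connected_induce_singleton G v).preconnected
      (hB.connected w).preconnected rfl ha hav.symm
  exists_adj := by
    have hle := le_update_self_iff.2 (Set.subset_insert v (B w))
    intro u x hux
    obtain ⟨b, hb, c, hc, hbc⟩ := hB.exists_adj hux
    exact ⟨b, hle u hb, c, hle x hc, hbc⟩

theorem exists_iUnion_eq_univ [Finite V] [Nonempty W] (hB : IsMinorModel B H G)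
    (hG : G.Preconnected) : ∃ C : W → Set V, IsMinorModel C H G ∧ ⋃ w, C w = Set.univ := by
  classical
  have := hB.finite
  obtain ⟨C, hC⟩ := Set.toFinite {C : W → Set V | IsMinorModel C H G} |>.exists_maximal ⟨B, hB⟩
  refine ⟨C, hC.prop, ?_⟩
  by_contra! hcov
  obtain ⟨y, hy⟩ := (Set.ne_univ_iff_exists_notMem _).1 hcov
  obtain ⟨x, hx⟩ := hC.prop.nonempty (Classical.arbitrary W)
  obtain ⟨p⟩ := hG x y
  obtain ⟨⟨⟨a, v⟩, hav⟩, -, ha, hv⟩ := p.exists_boundary_dart _ (Set.mem_iUnion_of_mem _ hx) hy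
  obtain ⟨w, hw⟩ := Set.mem_iUnion.1 ha
  have hv' : ∀ u, v ∉ C u := by simpa using hv
  have hmem : v ∈ Function.update C w (insert v (C w)) w := by simp
  exact hv' w (hC.le_of_ge (hC.prop.update_insert hw hv' hav)
    (le_update_self_iff.2 (Set.subset_insert v (C w))) w hmem)

end IsMinorModel

end MinorModel

section Minor

variable {U V W : Type} {F : SimpleGraph U} {G : SimpleGraph V} {H : SimpleGraph W}

theorem isMinorOf_iff_exists_isMinorModel :
    IsMinorOf H G ↔ ∃ B : W → Set V, IsMinorModel B H G := by
  constructor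
  · rintro ⟨B, -, hdisj, hconn, hadj⟩
    exact ⟨B, fun u w => hdisj u w, hconn, hadj⟩
  · rintro ⟨B, hB⟩
    exact ⟨B, hB.nonempty, fun _ _ huw => hB.disjoint huw, hB.connected, hB.exists_adj⟩

theorem IsProperContractionMinorOf.isMinorOf (h : IsProperContractionMinorOf H G) :
    IsMinorOf H G := by
  obtain ⟨B, hne, hdisj, -, hconn, hadj, -⟩ := h
  exact ⟨B, hne, hdisj, hconn, fun u w huw => (hadj u w huw.ne).1 huw⟩

theorem IsProperContractionMinorOf.card_lt [Finite V] (h : IsProperContractionMinorOf H G) :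
    Nat.card W < Nat.card V := by
  obtain ⟨B, hne, hdisj, -, -, -, w, hw⟩ := h
  by_contra! hcard
  obtain ⟨e, he⟩ := exists_equiv_forall_eq_singleton hne (fun u w => hdisj u w) hcard
  exact Set.not_nontrivial_singleton (he w ▸ hw)

theorem IsMinorModel.isProperContractionMinorOf_branchGraph [Finite V] {B : W → Set V}
    (hB : IsMinorModel B H G) (hcov : ⋃ w, B w = Set.univ) (hcard : Nat.card W < Nat.card V) :
    IsProperContractionMinorOf (branchGraph G B) G := by
  have := hB.finite
  choose g hg using fun v => Set.mem_iUnion.1 (hcov.ge (Set.mem_univ v))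
  have hg_inj : ¬Function.Injective g := fun hinj =>
    hcard.not_ge (Nat.card_le_card_of_injective g hinj)
  obtain ⟨a, b, hgab, hab⟩ := Function.not_injective_iff.1 hg_inj
  exact ⟨B, hB.nonempty, fun _ _ huw => hB.disjoint huw, fun v => ⟨g v, hg v⟩, hB.connected,
    fun _ _ huw => and_iff_right huw, g a, a, hg a, b, hgab ▸ hg b, hab⟩

namespace IsMinorOf

theorem of_isContained (h : H ⊑ G) : IsMinorOf H G :=
  let ⟨f⟩ := h
  isMinorOf_iff_exists_isMinorModel.2 ⟨_, .of_copy f⟩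

theorem trans (hFH : IsMinorOf F H) (hHG : IsMinorOf H G) : IsMinorOf F G := by
  obtain ⟨C, hC⟩ := isMinorOf_iff_exists_isMinorModel.1 hFH
  obtain ⟨B, hB⟩ := isMinorOf_iff_exists_isMinorModel.1 hHG
  exact isMinorOf_iff_exists_isMinorModel.2 ⟨_, hB.comp hC⟩

theorem card_le [Finite V] (h : IsMinorOf H G) : Nat.card W ≤ Nat.card V := by
  obtain ⟨B, hne, hdisj, -, -⟩ := h
  obtain ⟨f, -⟩ := exists_embedding_forall_mem hne fun u w => hdisj u w
  exact Nat.card_le_card_of_injective f f.injective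

theorem exists_iso_le [Finite V] (h : IsMinorOf H G) (hcard : Nat.card V ≤ Nat.card W) :
    ∃ K ≤ G, Nonempty (H ≃g K) := by
  obtain ⟨B, hne, hdisj, -, hadj⟩ := h
  obtain ⟨e, he⟩ := exists_equiv_forall_eq_singleton hne (fun u w => hdisj u w) hcard
  refine ⟨H.map e, ?_, ⟨Iso.map e H⟩⟩
  rintro _ _ ⟨-, u, w, huw, rfl, rfl⟩
  simpa [he] using hadj huw

theorem antisymm [Finite V] (hHG : IsMinorOf H G) (hGH : IsMinorOf G H) :
    Nonempty (H ≃g G) := by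
  obtain ⟨B, hB⟩ := isMinorOf_iff_exists_isMinorModel.1 hHG
  have := hB.finite
  obtain ⟨K, hKG, ⟨e⟩⟩ := hHG.exists_iso_le hGH.card_le
  obtain ⟨L, hLH, ⟨f⟩⟩ := hGH.exists_iso_le hHG.card_le
  have hcard : G.edgeSet.ncard ≤ K.edgeSet.ncard :=
    calc G.edgeSet.ncard = L.edgeSet.ncard := Nat.card_congr f.mapEdgeSet
      _ ≤ H.edgeSet.ncard := Set.ncard_le_ncard (edgeSet_mono hLH)
      _ = K.edgeSet.ncard := Nat.card_congr e.mapEdgeSet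
  obtain rfl := eq_of_le_of_ncard_edgeSet_le hKG hcard
  exact ⟨e⟩

theorem exists_isProperContractionMinorOf_ge [Finite V] [Nonempty W]
    (h : IsMinorOf H G) (hG : G.Preconnected) (hcard : Nat.card W < Nat.card V) :
    ∃ K ≥ H, IsProperContractionMinorOf K G := by
  obtain ⟨B, hB⟩ := isMinorOf_iff_exists_isMinorModel.1 h
  obtain ⟨C, hC, hcov⟩ := hB.exists_iUnion_eq_univ hG
  exact ⟨_, hC.le_branchGraph, hC.isProperContractionMinorOf_branchGraph hcov hcard⟩

end IsMinorOf

end Minor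

section MinDegC

variable {V W : Type} [Fintype V] {G : SimpleGraph V} {H : SimpleGraph W} {k : ℕ}

theorem degC_eq_degree (G : SimpleGraph V) (v : V) [Fintype (G.neighborSet v)] :
    degC G v = G.degree v := by
  unfold degC
  congr!

theorem minDegC_eq_minDegree (G : SimpleGraph V) [DecidableRel G.Adj] :
    minDegC G = G.minDegree := by
  unfold minDegC
  congr!

theorem nonempty_of_minDegC_pos (hG : 0 < minDegC G) : Nonempty V := by
  classical
  by_contra hV
  rw [not_nonempty_iff] at hV
  simp [minDegC_eq_minDegree] at hG

namespace IsMinorOf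

theorem nonempty_iso_of_isIndepSet_lt_degC [Fintype W] (hHG : IsMinorOf H G)
    (hcard : Nat.card V ≤ Nat.card W) (hH : k < minDegC H)
    (hG : G.IsIndepSet {v | k + 1 < degC G v}) : Nonempty (H ≃g G) := by
  classical
  obtain ⟨K, hKG, ⟨e⟩⟩ := hHG.exists_iso_le hcard
  rw [minDegC_eq_minDegree, e.minDegree_eq] at hH
  simp only [degC_eq_degree] at hG
  obtain rfl : K = G := eq_of_le_of_isIndepSet_lt_degree hKG
    (fun v => hH.trans_le (K.minDegree_le_degree v)) hG
  exact ⟨e⟩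

theorem exists_isProperContractionMinorOf_minDegC_ge {V : Type} [Finite V] {G : SimpleGraph V}
    [Fintype W] [Nonempty W] (hHG : IsMinorOf H G) (hG : G.Preconnected)
    (hcard : Nat.card W < Nat.card V) :
    ∃ K : SimpleGraph W, IsProperContractionMinorOf K G ∧ minDegC H ≤ minDegC K := by
  classical
  obtain ⟨K, hHK, hKG⟩ := hHG.exists_isProperContractionMinorOf_ge hG hcard
  refine ⟨K, hKG, ?_⟩
  simpa only [minDegC_eq_minDegree] using minDegree_le_minDegree hHK

end IsMinorOf

end MinDegC

section MemDHat

variable {V W : Type} [Fintype W] {G : SimpleGraph V} {H : SimpleGraph W} {k : ℕ}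

theorem MemDHat.nonempty_iso (hG : MemDHat k G) (hHG : IsMinorOf H G) (hH : k < minDegC H) :
    Nonempty (H ≃g G) := by
  by_contra hn
  exact (hG.2 W H ⟨hHG, hn⟩ W H (.of_isContained .rfl)).not_gt hH

theorem memDHat_iff_forall_isMinorOf_nonempty_iso [Fintype V] :
    MemDHat k G ↔ k < minDegC G ∧
      ∀ (W : Type) [Fintype W] (H : SimpleGraph W),
        IsMinorOf H G → k < minDegC H → Nonempty (H ≃g G) := by
  classical
  constructor
  · refine fun hG => ⟨?_, fun W _ H => hG.nonempty_iso⟩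
    have hnot := hG.1
    simp only [MemD, not_forall, not_le] at hnot
    obtain ⟨W, _, H, hHG, hH⟩ := hnot
    obtain ⟨e⟩ := hG.nonempty_iso hHG hH
    simpa only [minDegC_eq_minDegree, e.minDegree_eq] using hH
  · rintro ⟨hG, hiso⟩
    refine ⟨fun hD => (hD V G (.of_isContained .rfl)).not_gt hG, fun W _ H hHG U _ F hFH => ?_⟩
    by_contra! hF
    obtain ⟨e⟩ := hiso U F (hFH.trans hHG.1) hF
    have hGH : IsMinorOf G H := .trans (.of_isContained ⟨e.symm.toCopy⟩) hFH
    exact hHG.2 (hHG.1.antisymm hGH)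

namespace MemDHat

theorem lt_minDegC [Fintype V] (hG : MemDHat k G) : k < minDegC G :=
  (memDHat_iff_forall_isMinorOf_nonempty_iso.1 hG).1

theorem minDegC_le_of_isProperContractionMinorOf (hG : MemDHat k G)
    (hHG : IsProperContractionMinorOf H G) : minDegC H ≤ k := by
  by_contra! hH
  obtain ⟨e⟩ := hG.nonempty_iso hHG.isMinorOf hH
  have : Finite V := .of_equiv W e.toEquiv
  exact hHG.card_lt.ne (Nat.card_congr e.toEquiv)

theorem connected [Finite V] (hG : MemDHat k G) : G.Connected := by
  classical
  have := Fintype.ofFinite V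
  obtain ⟨v⟩ := nonempty_of_minDegC_pos (Nat.zero_lt_of_lt hG.lt_minDegC)
  let C := G.connectedComponentMk v
  have hC : k < minDegC C.toSimpleGraph := hG.lt_minDegC.trans_le <| by
    simpa only [minDegC_eq_minDegree] using minDegree_le_minDegree_toSimpleGraph C
  have hCG : IsMinorOf C.toSimpleGraph G := .of_isContained ⟨(Embedding.induce C.supp).toCopy⟩
  obtain ⟨e⟩ := hG.nonempty_iso hCG hC
  exact e.connected_iff.1 C.connected_toSimpleGraph

theorem isIndepSet_lt_degC [Fintype V] (hG : MemDHat k G) :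
    G.IsIndepSet {v | k + 1 < degC G v} := by
  classical
  intro v hv w hw _ hvw
  let K := G.deleteEdges {s(v, w)}
  have hle : K ≤ G := G.deleteEdges_le _
  have hK : k < minDegC K := by
    have hmin := hG.lt_minDegC
    simp only [minDegC_eq_minDegree, degC_eq_degree, Set.mem_ofPred_eq] at hmin hv hw ⊢
    exact le_minDegree_deleteEdges_singleton hmin hv hw
  obtain ⟨e⟩ := hG.nonempty_iso (.of_isContained (.of_le hle)) hK
  have hKG : K = G := eq_of_le_of_ncard_edgeSet_le hle (Nat.card_congr e.mapEdgeSet).ge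
  simpa [K] using hKG.ge hvw

theorem minDegC_eq [Fintype V] (hG : MemDHat k G) : minDegC G = k + 1 := by
  classical
  have hindep := hG.isIndepSet_lt_degC
  refine le_antisymm ?_ hG.lt_minDegC
  simp only [minDegC_eq_minDegree, degC_eq_degree] at hindep ⊢
  exact minDegree_le_of_isIndepSet_lt_degree hindep

end MemDHat

end MemDHat

/-- Lemma 2.1: `G ∈ D̂_k` iff (D1) `G` has minimum degree `k+1`, (D2) every
proper contraction minor of `G` has minimum degree at most `k`, (D3) `G` is
connected, and (D4) no two vertices of degree at least `k+2` are adjacent. -/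
theorem memDHat_iff_basic_degree_conditions (k : ℕ) {V : Type} [Fintype V] (G : SimpleGraph V) :
    MemDHat k G ↔
      (minDegC G = k + 1) ∧
      (∀ (W : Type) [Fintype W] (H : SimpleGraph W),
        IsProperContractionMinorOf H G → minDegC H ≤ k) ∧
      G.Connected ∧
      (∀ v w : V, G.Adj v w → ¬(k + 2 ≤ degC G v ∧ k + 2 ≤ degC G w)) := by
  refine ⟨fun hG => ⟨hG.minDegC_eq, fun W _ H => hG.minDegC_le_of_isProperContractionMinorOf,
    hG.connected, fun v w hvw h => hG.isIndepSet_lt_degC h.1 h.2 hvw.ne hvw⟩, ?_⟩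
  rintro ⟨hmin, hcontr, hconn, hadj⟩
  refine memDHat_iff_forall_isMinorOf_nonempty_iso.2 ⟨by omega, fun W _ H hHG hH => ?_⟩
  rcases lt_or_ge (Nat.card W) (Nat.card V) with hcard | hcard
  · have := nonempty_of_minDegC_pos (Nat.zero_lt_of_lt hH)
    obtain ⟨K, hKG, hHK⟩ :=
      hHG.exists_isProperContractionMinorOf_minDegC_ge hconn.preconnected hcard
    exact absurd (hcontr W K hKG) (hH.trans_le hHK).not_ge
  · exact hHG.nonempty_iso_of_isIndepSet_lt_degC hcard hH
      fun v hv w hw _ hvw => hadj v w hvw ⟨hv, hw⟩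
end

section
/- For every k ≥ 1 and every graph G ∈ D̂_k, every edge vw of G has a low-degree common neighbour; that is, there is a vertex x of G, distinct from v and w, adjacent to both v and w, whose degree equals the minimum degree k+1 of G. -/
open SimpleGraph

/-!
Contracting a connected set `S` of at least two vertices of `G ∈ D̂_k` must create a vertex of
degree at most `k`: either the contracted vertex, so that at most `k` vertices outside `S` have a
neighbour in `S`, or a vertex that had several neighbours in `S`. For `S = {v, w}` the second case
gives the required common neighbour. In the first case `v` and `w` have the same `k` further
neighbours. If none of these has degree `k + 1`, then they are pairwise nonadjacent, since deleting
an edge must also create a vertex of degree at most `k`. Contracting `{u, v, w}` for one of them,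
`u`, then creates a vertex of degree at least `k - 1 + k` and leaves all other degrees above `k`, a
contradiction when `k ≥ 2`. When `k = 1`, the triangle `{u, v, w}` is not in `D_1`, so by
minimality it is all of `G`.
-/

section Degree

variable {V : Type} [Fintype V] (G : SimpleGraph V)

theorem degC_eq_ncard_neighborSet (v : V) : degC G v = (G.neighborSet v).ncard := by
  classical
  rw [degC, ← G.card_neighborSet_eq_degree v, ← Nat.card_eq_fintype_card, Nat.card_coe_set_eq]

theorem minDegC_le_ncard_neighborSet (v : V) : minDegC G ≤ (G.neighborSet v).ncard := by
  classical
  exact (G.minDegree_le_degree v).trans_eq (degC_eq_ncard_neighborSet G v)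

theorem exists_ncard_neighborSet_eq_minDegC [Nonempty V] :
    ∃ v, (G.neighborSet v).ncard = minDegC G := by
  classical
  obtain ⟨v, hv⟩ := G.exists_minimal_degree_vertex
  exact ⟨v, (degC_eq_ncard_neighborSet G v).symm.trans hv.symm⟩

end Degree

theorem ncard_neighborSet_le_add_ncard_deleteEdges {V : Type*} [Finite V] (G : SimpleGraph V)
    (E : Set (Sym2 V)) (x : V) :
    (G.neighborSet x).ncard ≤
      ((G.deleteEdges E).neighborSet x).ncard + {y | s(x, y) ∈ E}.ncard := by
  have hdelete : (G.deleteEdges E).neighborSet x = G.neighborSet x \ {y | s(x, y) ∈ E} := by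
    ext y
    simp
  rw [hdelete]
  exact Set.ncard_le_ncard_sdiff_add_ncard _ _

section Minor

variable {V W : Type} {G : SimpleGraph V} {H : SimpleGraph W}

theorem IsMinorOf.of_isContained_s7 (h : H ⊑ G) : IsMinorOf H G := by
  obtain ⟨f⟩ := h
  exact ⟨fun x => {f x}, fun _ => Set.singleton_nonempty _,
    fun _ _ hne => Set.disjoint_singleton.2 (f.injective.ne hne), fun _ => .of_subsingleton,
    fun _ _ hadj => ⟨_, rfl, _, rfl, f.toHom.map_adj hadj⟩⟩

theorem IsMinorOf.isProperMinorOf_of_card_ne (h : IsMinorOf H G) (hcard : Nat.card W ≠ Nat.card V) :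
    IsProperMinorOf H G :=
  ⟨h, fun ⟨e⟩ => hcard (Nat.card_congr e.toEquiv)⟩

theorem IsProperMinorOf.of_lt [Finite V] {G' : SimpleGraph V} (h : G' < G) :
    IsProperMinorOf G' G :=
  ⟨.of_isContained (.of_le h.le), fun ⟨e⟩ =>
    (Set.ncard_lt_ncard (edgeSet_strict_mono h)).ne (Nat.card_congr e.mapEdgeSet)⟩

end Minor

section Contraction

variable {V : Type*} (G : SimpleGraph V) (S : Set V)

/-- The outer vertex boundary of `S` in `G`, i.e. the open neighbourhood of the vertex set `S`. -/
def outerBoundary : Set V :=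
  {x | x ∉ S ∧ ∃ s ∈ S, G.Adj x s}

/-- The graph obtained from `G` by contracting the vertex set `S` to a single vertex, encoded as
`none`. It is a minor of `G` when `S` is connected. -/
def contractSet : SimpleGraph (Option ↥Sᶜ) where
  Adj
    | none, none => False
    | none, some y => y.1 ∈ outerBoundary G S
    | some x, none => x.1 ∈ outerBoundary G S
    | some x, some y => G.Adj x y
  symm := ⟨by
    rintro (_ | x) (_ | y) h
    exacts [h, h, h, Adj.symm h]⟩
  loopless := ⟨by
    rintro (_ | x) h
    exacts [h, G.irrefl h]⟩

variable {G S}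

theorem outerBoundary_insert {u : V} :
    outerBoundary G (insert u S) = (G.neighborSet u \ S) ∪ (outerBoundary G S \ {u}) := by
  ext x
  have := G.adj_comm x u
  have : G.Adj u x → x ≠ u := fun h => h.ne'
  simp only [outerBoundary, Set.mem_ofPred_eq, Set.mem_union, Set.mem_sdiff, mem_neighborSet,
    Set.mem_singleton_iff, Set.mem_insert_iff, exists_eq_or_imp]
  tauto

theorem neighborSet_inter_eq_empty {x : V} (hxS : x ∉ S) (hx : x ∉ outerBoundary G S) :
    G.neighborSet x ∩ S = ∅ :=
  Set.eq_empty_of_forall_notMem fun s hs => hx ⟨hxS, s, hs.2, hs.1⟩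

theorem neighborSet_sdiff_subset_outerBoundary {v : V} (hv : v ∈ S) :
    G.neighborSet v \ S ⊆ outerBoundary G S :=
  fun _ hx => ⟨hx.2, v, hv, hx.1.symm⟩

theorem connected_induce_insert (hS : (G.induce S).Connected) {u : V}
    (hu : u ∈ outerBoundary G S) : (G.induce (insert u S)).Connected := by
  obtain ⟨-, s, hs, hadj⟩ := hu
  exact connected_induce_union (s := {u}) .of_subsingleton hS.preconnected rfl hs hadj

theorem ncard_some_image_preimage_val (A : Set V) :
    (some '' (Subtype.val ⁻¹' A : Set ↥Sᶜ)).ncard = (A \ S).ncard := by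
  rw [Set.ncard_image_of_injective _ (Option.some_injective _),
    ← Set.ncard_image_of_injective _ Subtype.val_injective, Subtype.image_preimage_coe,
    Set.inter_comm, Set.sdiff_eq]

theorem ncard_neighborSet_contractSet_none :
    ((contractSet G S).neighborSet none).ncard = (outerBoundary G S).ncard := by
  have hnbhd : (contractSet G S).neighborSet none =
      some '' (Subtype.val ⁻¹' outerBoundary G S : Set ↥Sᶜ) := by
    ext (_ | y) <;> simp [contractSet]
  have hdisj : Disjoint (outerBoundary G S) S := Set.disjoint_left.2 fun _ hx => hx.1
  rw [hnbhd, ncard_some_image_preimage_val, hdisj.sdiff_eq_left]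

theorem ncard_neighborSet_contractSet_some_of_mem [Finite V] {x : ↥Sᶜ}
    (hx : x.1 ∈ outerBoundary G S) :
    ((contractSet G S).neighborSet (some x)).ncard + (G.neighborSet x ∩ S).ncard =
      (G.neighborSet x).ncard + 1 := by
  have hnbhd : (contractSet G S).neighborSet (some x) =
      insert none (some '' (Subtype.val ⁻¹' G.neighborSet x : Set ↥Sᶜ)) := by
    ext (_ | y) <;> simp [contractSet, hx]
  rw [hnbhd, Set.ncard_insert_of_notMem (by simp), ncard_some_image_preimage_val,
    ← Set.ncard_inter_add_ncard_sdiff_eq_ncard (G.neighborSet x) S]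
  ring

theorem ncard_neighborSet_contractSet_some_of_notMem {x : ↥Sᶜ} (hx : x.1 ∉ outerBoundary G S) :
    ((contractSet G S).neighborSet (some x)).ncard = (G.neighborSet x).ncard := by
  have hnbhd : (contractSet G S).neighborSet (some x) =
      some '' (Subtype.val ⁻¹' G.neighborSet x : Set ↥Sᶜ) := by
    ext (_ | y) <;> simp [contractSet, hx]
  rw [hnbhd, ncard_some_image_preimage_val,
    (Set.disjoint_iff_inter_eq_empty.2 (neighborSet_inter_eq_empty x.2 hx)).sdiff_eq_left]

end Contraction

theorem IsMinorOf.contractSet {V : Type} {G : SimpleGraph V} {S : Set V}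
    (hS : (G.induce S).Connected) : IsMinorOf (contractSet G S) G := by
  refine ⟨fun o => o.elim S fun x => {x.1}, ?_, ?_, ?_, ?_⟩
  · rintro (_ | x)
    exacts [Set.nonempty_coe_sort.1 hS.nonempty, Set.singleton_nonempty _]
  · rintro (_ | x) (_ | y) hne
    · exact absurd rfl hne
    · exact Set.disjoint_singleton_right.2 y.2
    · exact Set.disjoint_singleton_left.2 x.2
    · exact Set.disjoint_singleton.2 fun h => hne (congrArg some (Subtype.ext h))
  · rintro (_ | x)
    exacts [hS, Connected.of_subsingleton (V := ({x.1} : Set V))]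
  · rintro (_ | x) (_ | y) hadj
    · exact hadj.elim
    · obtain ⟨-, s, hs, h⟩ := hadj
      exact ⟨s, hs, y, rfl, h.symm⟩
    · obtain ⟨-, s, hs, h⟩ := hadj
      exact ⟨x, rfl, s, hs, h⟩
    · exact ⟨x, rfl, y, rfl, hadj⟩

theorem IsProperMinorOf.contractSet {V : Type} [Finite V] {G : SimpleGraph V} {S : Set V}
    (hS : (G.induce S).Connected) (hnontrivial : S.Nontrivial) :
    IsProperMinorOf (contractSet G S) G := by
  refine (IsMinorOf.contractSet hS).isProperMinorOf_of_card_ne ?_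
  have hlt : 1 < S.ncard := Set.one_lt_ncard_iff_nontrivial.2 hnontrivial
  have hsum := Set.ncard_add_ncard_compl S
  rw [Finite.card_option, Nat.card_coe_set_eq]
  omega

theorem MemD.exists_ncard_neighborSet_le {k : ℕ} {V : Type} [Finite V] [Nonempty V]
    {G : SimpleGraph V} (hG : MemD k G) : ∃ x, (G.neighborSet x).ncard ≤ k := by
  cases nonempty_fintype V
  obtain ⟨x, hx⟩ := exists_ncard_neighborSet_eq_minDegC G
  exact ⟨x, hx.trans_le (hG V G (.of_isContained .rfl))⟩

namespace MemDHat

variable {k : ℕ} {V : Type} {G : SimpleGraph V}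

theorem exists_ncard_neighborSet_le (hG : MemDHat k G) {W : Type} [Finite W] [Nonempty W]
    {H : SimpleGraph W} (hH : IsProperMinorOf H G) : ∃ x, (H.neighborSet x).ncard ≤ k := by
  cases nonempty_fintype W
  exact (hG.2 W H hH).exists_ncard_neighborSet_le

theorem lt_ncard_neighborSet (hG : MemDHat k G) (v : V) : k < (G.neighborSet v).ncard := by
  obtain ⟨hnot, hproper⟩ := hG
  simp only [MemD, not_forall, not_le] at hnot
  obtain ⟨W, _, H, hminor, hlt⟩ := hnot
  obtain ⟨e⟩ : Nonempty (H ≃g G) := by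
    by_contra hiso
    exact hlt.not_ge (hproper W H ⟨hminor, hiso⟩ W H (.of_isContained .rfl))
  calc
    k < minDegC H := hlt
    _ ≤ (H.neighborSet (e.symm v)).ncard := minDegC_le_ncard_neighborSet H _
    _ = (G.neighborSet v).ncard := (Nat.card_congr (e.symm.mapNeighborSet v)).symm

theorem card_eq_of_not_cliqueFree (hG : MemDHat k G) (hclique : ¬G.CliqueFree (k + 2)) :
    Nat.card V = k + 2 := by
  by_contra hcard
  have hminor : IsMinorOf (completeGraph (Fin (k + 2))) G :=
    .of_isContained ((not_cliqueFree_iff_top_isContained _).1 hclique)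
  obtain ⟨x, hx⟩ := hG.exists_ncard_neighborSet_le
    (hminor.isProperMinorOf_of_card_ne (by simpa using Ne.symm hcard))
  rw [completeGraph, neighborSet_top, Set.ncard_compl, Set.ncard_singleton, Nat.card_fin] at hx
  omega

variable [Finite V]

theorem ncard_neighborSet_eq_of_not_cliqueFree (hG : MemDHat k G)
    (hclique : ¬G.CliqueFree (k + 2)) (x : V) : (G.neighborSet x).ncard = k + 1 := by
  have hlt : (G.neighborSet x).ncard < Nat.card V :=
    Set.ncard_lt_card fun h => G.irrefl (h ▸ Set.mem_univ x : x ∈ G.neighborSet x)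
  have := hG.lt_ncard_neighborSet x
  have := hG.card_eq_of_not_cliqueFree hclique
  omega

theorem ncard_neighborSet_eq_or_eq_of_adj (hG : MemDHat k G) {a b : V} (hab : G.Adj a b) :
    (G.neighborSet a).ncard = k + 1 ∨ (G.neighborSet b).ncard = k + 1 := by
  have : Nonempty V := ⟨a⟩
  have hlt : G.deleteEdges {s(a, b)} < G :=
    (G.deleteEdges_le _).lt_of_ne fun h =>
      Set.disjoint_singleton_right.1 (deleteEdges_eq_self.1 h) hab
  obtain ⟨x, hx⟩ := hG.exists_ncard_neighborSet_le (.of_lt hlt)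
  have hdeg := hG.lt_ncard_neighborSet x
  have hdelete := ncard_neighborSet_le_add_ncard_deleteEdges G {s(a, b)} x
  have hlost : {y | s(x, y) ∈ ({s(a, b)} : Set (Sym2 V))}.ncard ≤ 1 :=
    Set.ncard_le_one_iff_subsingleton.2 fun y hy z hz => Sym2.congr_right.1 (hy.trans hz.symm)
  obtain ⟨y, hy⟩ : {y | s(x, y) ∈ ({s(a, b)} : Set (Sym2 V))}.Nonempty :=
    Set.nonempty_of_ncard_ne_zero (by omega)
  have hlow : (G.neighborSet x).ncard = k + 1 := by omega
  rcases Sym2.mem_iff.1 (hy ▸ Sym2.mem_mk_left x y) with rfl | rfl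
  exacts [.inl hlow, .inr hlow]

theorem ncard_outerBoundary_le_or_exists (hG : MemDHat k G) {S : Set V}
    (hS : (G.induce S).Connected) (hnontrivial : S.Nontrivial) :
    (outerBoundary G S).ncard ≤ k ∨
      ∃ x ∈ outerBoundary G S, (G.neighborSet x).ncard < k + (G.neighborSet x ∩ S).ncard := by
  obtain ⟨_ | x, hx⟩ := hG.exists_ncard_neighborSet_le (.contractSet hS hnontrivial)
  · exact .inl (ncard_neighborSet_contractSet_none.symm.trans_le hx)
  by_cases hmem : x.1 ∈ outerBoundary G S
  · have := ncard_neighborSet_contractSet_some_of_mem hmem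
    exact .inr ⟨x, hmem, by omega⟩
  · rw [ncard_neighborSet_contractSet_some_of_notMem hmem] at hx
    exact absurd hx (hG.lt_ncard_neighborSet x).not_ge

theorem exists_common_neighbor_or_ncard_outerBoundary_le (hG : MemDHat k G) {v w : V}
    (hvw : G.Adj v w) :
    (∃ x ∈ G.commonNeighbors v w, (G.neighborSet x).ncard = k + 1) ∨
      (outerBoundary G {v, w}).ncard ≤ k := by
  refine (hG.ncard_outerBoundary_le_or_exists (induce_pair_connected_of_adj hvw)
    (Set.nontrivial_pair hvw.ne)).symm.imp_left ?_
  rintro ⟨x, -, hlt⟩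
  have hdeg := hG.lt_ncard_neighborSet x
  have hpair : ({v, w} : Set V).ncard = 2 := Set.ncard_pair hvw.ne
  have hle : (G.neighborSet x ∩ {v, w}).ncard ≤ ({v, w} : Set V).ncard :=
    Set.ncard_inter_le_ncard_right _ _
  have hinter : G.neighborSet x ∩ {v, w} = {v, w} :=
    Set.eq_of_subset_of_ncard_le Set.inter_subset_right (by omega)
  obtain ⟨hv, hw⟩ := Set.pair_subset_iff.1 (Set.inter_eq_right.1 hinter)
  exact ⟨x, ⟨hv.symm, hw.symm⟩, by omega⟩

theorem le_ncard_neighborSet_sdiff_pair (hG : MemDHat k G) (v w : V) :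
    k ≤ (G.neighborSet v \ {v, w}).ncard := by
  have hv : G.neighborSet v \ {v, w} = G.neighborSet v \ {w} := by
    rw [Set.insert_eq, ← Set.sdiff_sdiff, Set.sdiff_singleton_eq_self G.notMem_neighborSet_self]
  have hdeg := hG.lt_ncard_neighborSet v
  have hsdiff := Set.ncard_le_ncard_sdiff_add_ncard (G.neighborSet v) {w}
  rw [Set.ncard_singleton] at hsdiff
  rw [hv]
  omega

theorem le_ncard_outerBoundary_pair (hG : MemDHat k G) (v w : V) :
    k ≤ (outerBoundary G {v, w}).ncard :=
  (hG.le_ncard_neighborSet_sdiff_pair v w).trans <|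
    Set.ncard_le_ncard (neighborSet_sdiff_subset_outerBoundary (Set.mem_insert _ _))

theorem outerBoundary_pair_subset_neighborSet (hG : MemDHat k G) {v w : V}
    (hle : (outerBoundary G {v, w}).ncard ≤ k) : outerBoundary G {v, w} ⊆ G.neighborSet v := by
  rw [← Set.eq_of_subset_of_ncard_le
    (neighborSet_sdiff_subset_outerBoundary (Set.mem_insert v {w}))
    (hle.trans (hG.le_ncard_neighborSet_sdiff_pair v w))]
  exact Set.sdiff_subset

theorem outerBoundary_pair_subset_commonNeighbors (hG : MemDHat k G) {v w : V}
    (hle : (outerBoundary G {v, w}).ncard ≤ k) :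
    outerBoundary G {v, w} ⊆ G.commonNeighbors v w := by
  refine Set.subset_inter (hG.outerBoundary_pair_subset_neighborSet hle) ?_
  rw [Set.pair_comm] at hle ⊢
  exact hG.outerBoundary_pair_subset_neighborSet hle

theorem ncard_outerBoundary_insert_le (hG : MemDHat k G) {S : Set V}
    (hS : (G.induce S).Connected) (hcard : S.ncard ≤ 2)
    (hhigh : ∀ x ∈ outerBoundary G S, (G.neighborSet x).ncard ≠ k + 1)
    {u : V} (hu : u ∈ outerBoundary G S) : (outerBoundary G (insert u S)).ncard ≤ k := by
  obtain ⟨s, hs⟩ := hS.nonempty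
  have hnontrivial : (insert u S).Nontrivial :=
    ⟨u, Set.mem_insert u S, s, Set.mem_insert_of_mem u hs, fun h => hu.1 (h ▸ hs)⟩
  refine (hG.ncard_outerBoundary_le_or_exists (connected_induce_insert hS hu)
    hnontrivial).resolve_right ?_
  rintro ⟨x, hx, hlt⟩
  have hdeg := hG.lt_ncard_neighborSet x
  by_cases hxS : x ∈ outerBoundary G S
  · have hux : u ∉ G.neighborSet x := fun h =>
      (hG.ncard_neighborSet_eq_or_eq_of_adj h).elim (hhigh x hxS) (hhigh u hu)
    have hinter : (G.neighborSet x ∩ insert u S).ncard ≤ S.ncard := by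
      rw [Set.inter_insert_of_notMem hux]
      exact Set.ncard_inter_le_ncard_right _ _
    have := hhigh x hxS
    omega
  · have hempty := neighborSet_inter_eq_empty (fun h => hx.1 (Set.mem_insert_of_mem u h)) hxS
    have hinter : (G.neighborSet x ∩ insert u S).ncard ≤ ({u} : Set V).ncard := by
      rw [Set.insert_eq, Set.inter_union_distrib_left, hempty, Set.union_empty]
      exact Set.ncard_inter_le_ncard_right _ _
    rw [Set.ncard_singleton] at hinter
    omega

theorem exists_mem_outerBoundary_pair_ncard_neighborSet_eq (hG : MemDHat k G) (hk : 2 ≤ k)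
    {v w : V} (hvw : G.Adj v w) :
    ∃ x ∈ outerBoundary G {v, w}, (G.neighborSet x).ncard = k + 1 := by
  by_contra! hhigh
  have hboundary := hG.le_ncard_outerBoundary_pair v w
  obtain ⟨u, hu⟩ : (outerBoundary G {v, w}).Nonempty := Set.nonempty_of_ncard_ne_zero (by omega)
  have hpair : ({v, w} : Set V).ncard = 2 := Set.ncard_pair hvw.ne
  have hupper := hG.ncard_outerBoundary_insert_le (induce_pair_connected_of_adj hvw) hpair.le
    hhigh hu
  have hdisj : Disjoint (G.neighborSet u \ {v, w}) (outerBoundary G {v, w} \ {u}) :=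
    Set.disjoint_left.2 fun x hx hx' =>
      (hG.ncard_neighborSet_eq_or_eq_of_adj hx.1).elim (hhigh u hu) (hhigh x hx'.1)
  rw [outerBoundary_insert, Set.ncard_union_eq hdisj] at hupper
  have hneighbors := Set.ncard_le_ncard_sdiff_add_ncard (G.neighborSet u) {v, w}
  have hothers := Set.ncard_sdiff_singleton_add_one hu
  have hdeg := hG.lt_ncard_neighborSet u
  have hne := hhigh u hu
  omega

end MemDHat

/-- Proposition 4.3: for `k ≥ 1` and `G ∈ D̂_k`, every edge `vw` of `G` has a
low-degree common neighbour: a vertex `x`, distinct from `v` and `w`, adjacent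
to both, whose degree equals the minimum degree `k+1` of `G`. -/
theorem memDHat_edge_has_low_degree_common_neighbour (k : ℕ) (hk : 1 ≤ k)
    {V : Type} [Fintype V] (G : SimpleGraph V) (hG : MemDHat k G)
    (v w : V) (hvw : G.Adj v w) :
    ∃ x : V, x ≠ v ∧ x ≠ w ∧ G.Adj x v ∧ G.Adj x w ∧ degC G x = k + 1 := by
  suffices h : ∃ x ∈ G.commonNeighbors v w, (G.neighborSet x).ncard = k + 1 by
    obtain ⟨x, ⟨hv, hw⟩, hx⟩ := h
    exact ⟨x, hv.ne', hw.ne', hv.symm, hw.symm, (degC_eq_ncard_neighborSet G x).trans hx⟩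
  refine (hG.exists_common_neighbor_or_ncard_outerBoundary_le hvw).elim id fun hle => ?_
  have hcommon := hG.outerBoundary_pair_subset_commonNeighbors hle
  obtain rfl | hk := hk.eq_or_lt
  · classical
    obtain ⟨u, hu⟩ : (outerBoundary G {v, w}).Nonempty :=
      Set.nonempty_of_ncard_ne_zero (Nat.one_le_iff_ne_zero.1 (hG.le_ncard_outerBoundary_pair v w))
    have htriangle : G.IsNClique 3 {v, w, u} :=
      is3Clique_triple_iff.2 ⟨hvw, (hcommon hu).1, (hcommon hu).2⟩
    exact ⟨u, hcommon hu,
      hG.ncard_neighborSet_eq_of_not_cliqueFree htriangle.not_cliqueFree u⟩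
  · obtain ⟨x, hx, hlow⟩ := hG.exists_mem_outerBoundary_pair_ncard_neighborSet_eq hk hvw
    exact ⟨x, hcommon hx, hlow⟩
end
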